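/- For every d ≥ 4, the edge polytope 𝒫_{K_d} of the complete graph K_d on d vertices is type I decomposable but not type II decomposable. -/

import Mathlib

/-- For an edge `e = {i,j}` of a graph on `[d]`, `rho e = 𝐞ᵢ + 𝐞ⱼ ∈ ℝ^d`. -/
noncomputable def rho {d : ℕ} (e : Sym2 (Fin d)) : Fin d → ℝ :=
  Sym2.lift ⟨fun i j => Pi.single i 1 + Pi.single j 1, fun _ _ => add_comm _ _⟩ e

/-- The edge polytope of a graph `G` on `[d]`: the convex hull of `{ρ(e) : e ∈ E(G)}`. -/
noncomputable def edgePolytope {d : ℕ} (G : SimpleGraph (Fin d)) : Set (Fin d → ℝ) :=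
  convexHull ℝ (rho '' G.edgeSet)

/-- A set is integral if all its extreme points have integer coordinates. -/
def IsIntegralSet {d : ℕ} (Q : Set (Fin d → ℝ)) : Prop :=
  ∀ x ∈ Q.extremePoints ℝ, ∀ i, ∃ n : ℤ, x i = (n : ℝ)

/-- The hyperplane `{x : ∑ aᵢxᵢ = c}` is a separating hyperplane of `𝒫_G`: it meets
`𝒫_G \ ∂𝒫_G` (the intrinsic interior), and both closed half-space slices are integral. -/
def IsSepHyperplane {d : ℕ} (G : SimpleGraph (Fin d)) (a : Fin d → ℝ) (c : ℝ) : Prop :=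
  a ≠ 0 ∧
  (∃ x ∈ intrinsicInterior ℝ (edgePolytope G), ∑ i, a i * x i = c) ∧
  IsIntegralSet (edgePolytope G ∩ {x | c ≤ ∑ i, a i * x i}) ∧
  IsIntegralSet (edgePolytope G ∩ {x | ∑ i, a i * x i ≤ c})

/-- `𝒫_G` is decomposable if it has a separating hyperplane. -/
def Decomposable {d : ℕ} (G : SimpleGraph (Fin d)) : Prop :=
  ∃ a c, IsSepHyperplane G a c

/-- Type I decomposability: a separating hyperplane through `0` with all `aᵢ ∈ {1,-1}`. -/
def TypeIDecomposable {d : ℕ} (G : SimpleGraph (Fin d)) : Prop :=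
  ∃ a : Fin d → ℝ, (∀ i, a i = 1 ∨ a i = -1) ∧ IsSepHyperplane G a 0

/-- Type II decomposability: a separating hyperplane through `0` with all `aᵢ ∈ {0,1,-1}`,
some `aᵢ = 0`, and no edge with signature `{1,1}` or `{-1,-1}`. -/
def TypeIIDecomposable {d : ℕ} (G : SimpleGraph (Fin d)) : Prop :=
  ∃ a : Fin d → ℝ, (∀ i, a i = 0 ∨ a i = 1 ∨ a i = -1) ∧ (∃ i, a i = 0) ∧
    (∀ i j, G.Adj i j → ¬(a i = 1 ∧ a j = 1) ∧ ¬(a i = -1 ∧ a j = -1)) ∧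
    IsSepHyperplane G a 0

/-- The second hypersimplex: the points of the unit cube whose coordinates sum to `2`. -/
def hypersimplexTwo (d : ℕ) : Set (Fin d → ℝ) :=
  {x | (∀ i, 0 ≤ x i ∧ x i ≤ 1) ∧ ∑ i, x i = 2}

lemma convex_hypersimplexTwo (d : ℕ) : Convex ℝ (hypersimplexTwo d) := by
  rintro x ⟨hx, hxs⟩ y ⟨hy, hys⟩ s t hs ht hst
  refine ⟨fun i => ?_, ?_⟩
  · have := hx i
    have := hy i
    simp only [Pi.add_apply, Pi.smul_apply, smul_eq_mul]
    constructor <;> nlinarith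
  · simp only [Pi.add_apply, Pi.smul_apply, smul_eq_mul, Finset.sum_add_distrib,
      ← Finset.mul_sum, hxs, hys]
    linarith

lemma isCompact_hypersimplexTwo (d : ℕ) : IsCompact (hypersimplexTwo d) := by
  have hcube : IsCompact (Set.univ.pi fun _ : Fin d => Set.Icc (0 : ℝ) 1) :=
    isCompact_univ_pi fun _ => isCompact_Icc
  have hclosed : IsClosed {x : Fin d → ℝ | ∑ i, x i = 2} :=
    isClosed_eq (by fun_prop) continuous_const
  convert hcube.inter_right hclosed using 1
  ext x
  simp only [hypersimplexTwo, Set.mem_inter_iff, Set.mem_univ_pi, Set.mem_Icc,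
    Set.mem_ofPred_eq]

lemma add_smul_single_sub_single_mem_hypersimplexTwo {d : ℕ} {x : Fin d → ℝ}
    (hx : x ∈ hypersimplexTwo d) {i j : Fin d} (hij : i ≠ j) {t : ℝ}
    (hi : 0 ≤ x i + t ∧ x i + t ≤ 1) (hj : 0 ≤ x j - t ∧ x j - t ≤ 1) :
    x + t • (Pi.single i 1 - Pi.single j 1 : Fin d → ℝ) ∈ hypersimplexTwo d := by
  refine ⟨fun k => ?_, ?_⟩
  · by_cases hki : k = i
    · subst hki
      simpa [hij] using hi
    · by_cases hkj : k = j
      · subst hkj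
        simpa [hki, sub_eq_add_neg] using hj
      · simpa [hki, hkj] using hx.1 k
  · simp [Finset.sum_add_distrib, ← Finset.mul_sum, hx.2]

/-- A weighted sum with an integral value and `0`-`1` weights cannot have exactly one non-integral
summand. -/
lemma exists_ne_nonintegral_of_sum_eq {d : ℕ} {x w : Fin d → ℝ} {m : ℤ} {i : Fin d}
    (hw : ∀ k, w k = 0 ∨ w k = 1) (hi : w i = 1) (hsum : ∑ k, w k * x k = m)
    (hx : ¬∃ n : ℤ, x i = n) : ∃ j, j ≠ i ∧ w j = 1 ∧ ¬∃ n : ℤ, x j = n := by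
  by_contra! h
  have hmem : ∑ k ∈ Finset.univ.erase i, w k * x k ∈ (Int.castRingHom ℝ).range := by
    refine Subring.sum_mem _ fun k hk => ?_
    rcases hw k with h0 | h1
    · simp [h0]
    · obtain ⟨n, hn⟩ := h k (Finset.ne_of_mem_erase hk) h1
      exact ⟨n, by simp [h1, hn]⟩
  obtain ⟨n, hn⟩ := hmem
  rw [← Finset.add_sum_erase _ _ (Finset.mem_univ i), hi, one_mul, ← hn] at hsum
  exact hx ⟨m - n, by push_cast; simp at hsum; linarith⟩

lemma isIntegralSet_hypersimplexTwo_inter_nonneg {d : ℕ} {a : Fin d → ℝ}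
    (ha : ∀ i, a i = 1 ∨ a i = -1) :
    IsIntegralSet (hypersimplexTwo d ∩ {x | 0 ≤ ∑ i, a i * x i}) := by
  intro x hx i
  by_contra hi
  obtain ⟨⟨hxH, hxa⟩, hext⟩ := mem_extremePoints.1 hx
  simp only [Set.mem_ofPred_eq] at hxa
  obtain ⟨j, hji, hj, hcase⟩ : ∃ j, j ≠ i ∧ (¬∃ n : ℤ, x j = n) ∧
      (a i = a j ∨ 0 < ∑ k, a k * x k) := by
    rcases hxa.eq_or_lt with h0 | hpos
    · have hw : ∑ k, (1 + a i * a k) / 2 * x k = ((1 : ℤ) : ℝ) := by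
        have : ∀ k, (1 + a i * a k) / 2 * x k = (1 / 2) * x k + a i / 2 * (a k * x k) :=
          fun k => by ring
        simp only [this, Finset.sum_add_distrib, ← Finset.mul_sum, hxH.2, ← h0]
        norm_num
      obtain ⟨j, hji, hwj, hj⟩ := exists_ne_nonintegral_of_sum_eq (i := i)
        (fun k => by rcases ha i with h | h <;> rcases ha k with h' | h' <;> norm_num [h, h'])
        (by rcases ha i with h | h <;> norm_num [h]) hw hi
      refine ⟨j, hji, hj, Or.inl ?_⟩
      rcases ha i with h | h <;> rcases ha j with h' | h' <;> rw [h, h'] at hwj ⊢ <;>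
        norm_num at hwj
    · obtain ⟨j, hji, -, hj⟩ := exists_ne_nonintegral_of_sum_eq (w := fun _ => 1) (m := 2)
        (i := i) (by simp) rfl (by simpa using hxH.2) hi
      exact ⟨j, hji, hj, Or.inr hpos⟩
  have hfrac : ∀ k, (¬∃ n : ℤ, x k = n) → 0 < x k ∧ 0 < 1 - x k := fun k hk => by
    refine ⟨(hxH.1 k).1.lt_of_ne fun h => hk ⟨0, by simp [← h]⟩,
      sub_pos.2 <| (hxH.1 k).2.lt_of_ne fun h => hk ⟨1, by simp [h]⟩⟩
  obtain ⟨hi0, hi1⟩ := hfrac i hi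
  obtain ⟨hj0, hj1⟩ := hfrac j hj
  obtain ⟨ε, hε, hεi, hεi', hεj, hεj', hεa⟩ : ∃ ε > 0, ε ≤ x i ∧ ε ≤ 1 - x i ∧ ε ≤ x j ∧
      ε ≤ 1 - x j ∧ (a i = a j ∨ 2 * ε ≤ ∑ k, a k * x k) := by
    obtain ⟨b, hb, hab⟩ : ∃ b > 0, a i = a j ∨ 2 * b ≤ ∑ k, a k * x k := by
      rcases hcase with h | h
      · exact ⟨1, one_pos, Or.inl h⟩
      · exact ⟨(∑ k, a k * x k) / 2, half_pos h, Or.inr (by linarith)⟩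
    obtain ⟨ε, hε, hlt⟩ := exists_between
      (lt_min hb (lt_min (lt_min hi0 hi1) (lt_min hj0 hj1)))
    simp only [lt_min_iff] at hlt
    obtain ⟨hεb, ⟨h1, h2⟩, h3, h4⟩ := hlt
    exact ⟨ε, hε, h1.le, h2.le, h3.le, h4.le, hab.imp_right fun h => by linarith⟩
  have hperturb : ∀ t, |t| ≤ ε → x + t • (Pi.single i 1 - Pi.single j 1 : Fin d → ℝ) ∈
      hypersimplexTwo d ∩ {x | 0 ≤ ∑ i, a i * x i} := fun t ht => by
    have := abs_le.1 ht
    refine ⟨add_smul_single_sub_single_mem_hypersimplexTwo hxH hji.symm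
      ⟨by linarith, by linarith⟩ ⟨by linarith, by linarith⟩, ?_⟩
    have hsum : ∑ k, a k * (x + t • (Pi.single i 1 - Pi.single j 1 : Fin d → ℝ)) k =
        ∑ k, a k * x k + t * (a i - a j) := by
      have : ∀ k, a k * (x + t • (Pi.single i 1 - Pi.single j 1 : Fin d → ℝ)) k =
          a k * x k + t * (a k * (Pi.single i 1 : Fin d → ℝ) k -
            a k * (Pi.single j 1 : Fin d → ℝ) k) := fun k => by
        simp only [Pi.add_apply, Pi.smul_apply, Pi.sub_apply, smul_eq_mul]
        ring
      simp only [this, Finset.sum_add_distrib, ← Finset.mul_sum, Finset.sum_sub_distrib]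
      simp [Pi.single_apply]
    rw [Set.mem_ofPred_eq, hsum]
    rcases hεa with h | h
    · simpa [h] using hxa
    · rcases ha i with h1 | h1 <;> rcases ha j with h2 | h2 <;> rw [h1, h2] <;> linarith
  have hplus := hperturb ε (abs_of_pos hε).le
  have hminus := hperturb (-ε) (by rw [abs_neg, abs_of_pos hε])
  have heq := (hext _ hplus _ hminus
    ⟨1 / 2, 1 / 2, by norm_num, by norm_num, by norm_num, by module⟩).1
  have := congrFun heq i
  simp [hji.symm] at this
  exact hε.ne' this

lemma rho_mk {d : ℕ} (i j : Fin d) :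
    rho s(i, j) = (Pi.single i 1 + Pi.single j 1 : Fin d → ℝ) := rfl

lemma rho_mem_hypersimplexTwo {d : ℕ} {i j : Fin d} (hij : i ≠ j) :
    rho s(i, j) ∈ hypersimplexTwo d := by
  rw [rho_mk]
  refine ⟨fun k => ?_, by simp [Finset.sum_add_distrib]; norm_num⟩
  by_cases hki : k = i
  · subst hki
    simp [hij]
  · by_cases hkj : k = j
    · subst hkj
      simp [hki]
    · simp [hki, hkj]

lemma exists_rho_eq_of_integral {d : ℕ} {x : Fin d → ℝ} (hx : x ∈ hypersimplexTwo d)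
    (hint : ∀ i, ∃ n : ℤ, x i = n) : ∃ i j, i ≠ j ∧ rho s(i, j) = x := by
  classical
  have h01 : ∀ i, x i = if x i = 1 then 1 else 0 := fun i => by
    obtain ⟨n, hn⟩ := hint i
    have h0 := (hx.1 i).1
    have h1 := (hx.1 i).2
    rw [hn] at h0 h1 ⊢
    norm_cast at h0 h1 ⊢
    split_ifs <;> omega
  have hcard : (Finset.univ.filter fun i => x i = 1).card = 2 := by
    have := hx.2
    rw [Finset.sum_congr rfl fun i _ => h01 i, Finset.sum_boole] at this
    exact_mod_cast this
  obtain ⟨i, j, hij, heq⟩ := Finset.card_eq_two.1 hcard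
  refine ⟨i, j, hij, funext fun k => ?_⟩
  have hk : x k = 1 ↔ k = i ∨ k = j := by simpa using Finset.ext_iff.1 heq k
  rw [h01 k, rho_mk]
  by_cases hki : k = i
  · subst hki
    simp [hk, hij]
  · by_cases hkj : k = j
    · subst hkj
      simp [hk, hki]
    · simp [hk, hki, hkj]

/-- The edge polytope of the complete graph is the second hypersimplex. -/
lemma edgePolytope_top (d : ℕ) :
    edgePolytope (⊤ : SimpleGraph (Fin d)) = hypersimplexTwo d := by
  refine Set.Subset.antisymm (convexHull_min ?_ (convex_hypersimplexTwo d)) ?_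
  · rintro _ ⟨e, he, rfl⟩
    induction e with
    | h i j => exact rho_mem_hypersimplexTwo (by simpa using he)
  · rw [← closure_convexHull_extremePoints (isCompact_hypersimplexTwo d)
      (convex_hypersimplexTwo d)]
    refine closure_minimal (convexHull_mono fun x hx => ?_)
      ((Set.toFinite _).isClosed_convexHull ℝ)
    have hall : hypersimplexTwo d ∩ {x | 0 ≤ ∑ i, (1 : Fin d → ℝ) i * x i} =
        hypersimplexTwo d :=
      Set.inter_eq_left.2 fun y hy => by simp [hy.2]
    have hint := isIntegralSet_hypersimplexTwo_inter_nonneg (d := d) (a := 1) (by simp)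
    rw [hall] at hint
    obtain ⟨i, j, hij, rfl⟩ := exists_rho_eq_of_integral hx.1 (hint x hx)
    exact ⟨s(i, j), by simpa using hij, rfl⟩

lemma mem_intrinsicInterior_hypersimplexTwo {d : ℕ} {x : Fin d → ℝ}
    (hx : ∀ i, 0 < x i ∧ x i < 1) (hsum : ∑ i, x i = 2) :
    x ∈ intrinsicInterior ℝ (hypersimplexTwo d) := by
  have hxH : x ∈ hypersimplexTwo d := ⟨fun i => ⟨(hx i).1.le, (hx i).2.le⟩, hsum⟩
  refine mem_intrinsicInterior.2 ⟨⟨x, subset_affineSpan ℝ _ hxH⟩, ?_, rfl⟩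
  have hspan : ∀ y ∈ affineSpan ℝ (hypersimplexTwo d), ∑ i, y i = 2 := by
    intro y hy
    refine affineSpan_induction (p := fun y => ∑ i, y i = 2) hy (fun y hy => hy.2) ?_
    intro c u v w hu hv hw
    simp [Finset.sum_add_distrib, ← Finset.mul_sum, hu, hv, hw]
  have hopen : IsOpen (Set.univ.pi fun _ : Fin d => Set.Ioo (0 : ℝ) 1) :=
    isOpen_set_pi Set.finite_univ fun _ _ => isOpen_Ioo
  refine mem_interior.2 ⟨_, fun y hy => ?_, hopen.preimage continuous_subtype_val, ?_⟩
  · exact ⟨fun i => ⟨(hy i trivial).1.le, (hy i trivial).2.le⟩, hspan y y.2⟩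
  · exact fun i _ => hx i

/-- Segments towards a point of the intrinsic interior can be prolonged beyond it. -/
lemma exists_lineMap_mem_of_mem_intrinsicInterior {E : Type*} [NormedAddCommGroup E]
    [NormedSpace ℝ E] {s : Set E} {x y : E} (hx : x ∈ intrinsicInterior ℝ s) (hy : y ∈ s) :
    ∃ t : ℝ, 1 < t ∧ AffineMap.lineMap y x t ∈ s := by
  obtain ⟨z, hz, rfl⟩ := mem_intrinsicInterior.1 hx
  have hline : ∀ t : ℝ, AffineMap.lineMap y (z : E) t ∈ affineSpan ℝ s :=
    fun t => AffineMap.lineMap_mem t (subset_affineSpan ℝ s hy) z.2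
  have hcont : Continuous fun t : ℝ =>
      (⟨AffineMap.lineMap y (z : E) t, hline t⟩ : affineSpan ℝ s) :=
    Continuous.subtype_mk AffineMap.lineMap_continuous _
  have hev : ∀ᶠ t in nhds (1 : ℝ), AffineMap.lineMap y (z : E) t ∈ s :=
    hcont.continuousAt.eventually_mem (s := Subtype.val ⁻¹' s)
      (by simpa using mem_interior_iff_mem_nhds.1 hz)
  obtain ⟨t, ht, ht1⟩ := ((hev.filter_mono nhdsWithin_le_nhds).and
    (self_mem_nhdsWithin (s := Set.Ioi (1 : ℝ)))).exists
  exact ⟨t, ht1, ht⟩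

lemma pos_of_mem_intrinsicInterior_hypersimplexTwo {d : ℕ} {x : Fin d → ℝ}
    (hx : x ∈ intrinsicInterior ℝ (hypersimplexTwo d)) {i j : Fin d} (hij : i ≠ j) :
    0 < x i := by
  obtain ⟨t, ht, hmem⟩ :=
    exists_lineMap_mem_of_mem_intrinsicInterior hx (rho_mem_hypersimplexTwo hij)
  have := (hmem.1 i).1
  simp [AffineMap.lineMap_apply, rho_mk, hij] at this
  nlinarith

/-- The midpoint of the edge between `𝐞ᵢ + 𝐞ₖ` and `𝐞ⱼ + 𝐞ₖ` is a vertex of the slice of the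
hypersimplex by `xⱼ ≤ xᵢ`. -/
lemma not_isIntegralSet_hypersimplexTwo_inter_le {d : ℕ} {i j k : Fin d} (hij : i ≠ j)
    (hik : i ≠ k) (hjk : j ≠ k) :
    ¬IsIntegralSet (hypersimplexTwo d ∩ {x | x j ≤ x i}) := by
  intro h
  let m : Fin d → ℝ := (1 / 2 : ℝ) • rho s(i, k) + (1 / 2 : ℝ) • rho s(j, k)
  have hmi : m i = 1 / 2 := by simp [m, rho_mk, hij, hik]
  have hmj : m j = 1 / 2 := by simp [m, rho_mk, hij.symm, hjk]
  have hmk : m k = 1 := by simp [m, rho_mk, hik.symm, hjk.symm]; norm_num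
  have hml : ∀ l, l ≠ i → l ≠ j → l ≠ k → m l = 0 := fun l h1 h2 h3 => by
    simp [m, rho_mk, h1, h2, h3]
  have hm : m ∈ hypersimplexTwo d := convex_hypersimplexTwo d (rho_mem_hypersimplexTwo hik)
    (rho_mem_hypersimplexTwo hjk) (by norm_num) (by norm_num) (by norm_num)
  have hsum : ∀ y ∈ hypersimplexTwo d, y k = 1 → (∀ l, l ≠ i → l ≠ j → l ≠ k → y l = 0) →
      y i + y j = 1 := fun y hy hk hl => by
    have hsub : ∑ l ∈ {i, j, k}, y l = ∑ l, y l :=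
      Finset.sum_subset (Finset.subset_univ _) fun l _ hl' => by
        simp only [Finset.mem_insert, Finset.mem_singleton, not_or] at hl'
        exact hl l hl'.1 hl'.2.1 hl'.2.2
    rw [Finset.sum_insert (by simp [hij, hik]), Finset.sum_pair hjk, hy.2, hk] at hsub
    linarith
  have hext : m ∈ (hypersimplexTwo d ∩ {x | x j ≤ x i}).extremePoints ℝ := by
    refine mem_extremePoints_iff_left.2 ⟨⟨hm, by simp [hmi, hmj]⟩, ?_⟩
    rintro y ⟨hy, hyij⟩ z ⟨hz, hzij⟩ ⟨s, t, hs, ht, hst, heq⟩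
    simp only [Set.mem_ofPred_eq] at hyij hzij
    have hcoord : ∀ l, s * y l + t * z l = m l := fun l => by simpa using congrFun heq l
    have hyk : y k = 1 := by
      have := hcoord k; have := (hy.1 k).2; have := (hz.1 k).2; nlinarith
    have hzk : z k = 1 := by
      have := hcoord k; have := (hy.1 k).2; have := (hz.1 k).2; nlinarith
    have hyl : ∀ l, l ≠ i → l ≠ j → l ≠ k → y l = 0 := fun l h1 h2 h3 => by
      have := hcoord l; have := hml l h1 h2 h3; have := (hy.1 l).1; have := (hz.1 l).1; nlinarith
    have hzl : ∀ l, l ≠ i → l ≠ j → l ≠ k → z l = 0 := fun l h1 h2 h3 => by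
      have := hcoord l; have := hml l h1 h2 h3; have := (hy.1 l).1; have := (hz.1 l).1; nlinarith
    have hysum := hsum y hy hyk hyl
    have hzsum := hsum z hz hzk hzl
    have hyi : y i = 1 / 2 := by
      have := hcoord i
      nlinarith
    funext l
    by_cases h1 : l = i
    · rw [h1, hyi, hmi]
    by_cases h2 : l = j
    · rw [h2, hmj]
      linarith
    by_cases h3 : l = k
    · rw [h3, hyk, hmk]
    rw [hyl l h1 h2 h3, hml l h1 h2 h3]
  obtain ⟨n, hn⟩ := h m hext i
  rw [hmi] at hn
  have : (1 : ℝ) = ((2 * n : ℤ) : ℝ) := by push_cast; linarith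
  norm_cast at this
  omega

lemma typeIDecomposable_top {d : ℕ} (hd : 4 ≤ d) :
    TypeIDecomposable (⊤ : SimpleGraph (Fin d)) := by
  obtain ⟨n, rfl⟩ := Nat.exists_eq_add_of_le' hd
  let a : Fin (n + 4) → ℝ := Fin.cons 1 (Fin.cons 1 fun _ => -1)
  have ha : ∀ i, a i = 1 ∨ a i = -1 := by
    refine Fin.cases (by simp [a]) (Fin.cases (by simp [a]) fun i => by simp [a])
  refine ⟨a, ha, fun h => by simpa [a] using congrFun h 0, ?_, ?_, ?_⟩
  · rw [edgePolytope_top]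
    have hn : (0 : ℝ) < n + 2 := by positivity
    refine ⟨Fin.cons (1 / 2) (Fin.cons (1 / 2) fun _ => 1 / (n + 2 : ℝ)),
      mem_intrinsicInterior_hypersimplexTwo ?_ ?_, ?_⟩
    · refine Fin.cases (by norm_num) (Fin.cases (by norm_num) fun i => ?_)
      simp only [Fin.cons_succ]
      exact ⟨by positivity, by rw [div_lt_one hn]; linarith [(Nat.cast_nonneg n : (0 : ℝ) ≤ n)]⟩
    · simp [Fin.sum_univ_succ (n := n + 3), Fin.sum_univ_succ (n := n + 2)]
      field_simp
      norm_num
    · simp [a, Fin.sum_univ_succ (n := n + 3), Fin.sum_univ_succ (n := n + 2)]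
      field_simp
      norm_num
  · rw [edgePolytope_top]
    exact isIntegralSet_hypersimplexTwo_inter_nonneg ha
  · rw [edgePolytope_top]
    have := isIntegralSet_hypersimplexTwo_inter_nonneg (a := -a)
      fun i => by rcases ha i with h | h <;> simp [h]
    simpa using this

lemma not_typeIIDecomposable_top {d : ℕ} (hd : 4 ≤ d) :
    ¬TypeIIDecomposable (⊤ : SimpleGraph (Fin d)) := by
  rintro ⟨a, ha, ⟨k, hk⟩, hadj, hne, ⟨x, hx, hx0⟩, hint, -⟩
  rw [edgePolytope_top] at hx hint
  have : Nontrivial (Fin d) := Fin.nontrivial_iff_two_le.2 (by omega)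
  have hpos : ∀ i, 0 < x i := fun i =>
    (exists_ne i).elim fun j hj => pos_of_mem_intrinsicInterior_hypersimplexTwo hx hj.symm
  have hp : ∃ i, a i = 1 := by
    by_contra! h
    have hle : ∀ i ∈ Finset.univ, a i * x i ≤ 0 := fun i _ => by
      have := hpos i
      rcases ha i with h' | h' | h'
      · simp [h']
      · exact absurd h' (h i)
      · rw [h']; linarith
    refine hne (funext fun i => ?_)
    have := (Finset.sum_eq_zero_iff_of_nonpos hle).1 hx0 i (Finset.mem_univ i)
    simpa [(hpos i).ne'] using this
  have hm : ∃ i, a i = -1 := by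
    by_contra! h
    have hle : ∀ i ∈ Finset.univ, 0 ≤ a i * x i := fun i _ => by
      have := hpos i
      rcases ha i with h' | h' | h'
      · simp [h']
      · rw [h']; linarith
      · exact absurd h' (h i)
    refine hne (funext fun i => ?_)
    have := (Finset.sum_eq_zero_iff_of_nonneg hle).1 hx0 i (Finset.mem_univ i)
    simpa [(hpos i).ne'] using this
  obtain ⟨i, hi⟩ := hp
  obtain ⟨j, hj⟩ := hm
  have hij : i ≠ j := fun h => by rw [h, hj] at hi; norm_num at hi
  have hik : i ≠ k := fun h => by rw [h, hk] at hi; norm_num at hi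
  have hjk : j ≠ k := fun h => by rw [h, hk] at hj; norm_num at hj
  have hsum : ∀ y : Fin d → ℝ, ∑ l, a l * y l = y i - y j := fun y => by
    rw [← Finset.sum_subset (Finset.subset_univ {i, j}) fun l _ hl => ?_, Finset.sum_pair hij,
      hi, hj]
    · ring
    · simp only [Finset.mem_insert, Finset.mem_singleton, not_or] at hl
      rcases ha l with h | h | h
      · simp [h]
      · exact absurd ⟨h, hi⟩ (hadj l i (by simpa using hl.1)).1
      · exact absurd ⟨h, hj⟩ (hadj l j (by simpa using hl.2)).2
  simp only [hsum, sub_nonneg] at hint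
  exact not_isIntegralSet_hypersimplexTwo_inter_le hij hik hjk hint

/-- For every `d ≥ 4`, the edge polytope of the complete graph `K_d` is
type I decomposable but not type II decomposable. -/
theorem completeGraph_typeI_not_typeII (d : ℕ) (hd : 4 ≤ d) :
    TypeIDecomposable (⊤ : SimpleGraph (Fin d)) ∧
      ¬ TypeIIDecomposable (⊤ : SimpleGraph (Fin d)) := by
  exact ⟨typeIDecomposable_top hd, not_typeIIDecomposable_top hd⟩
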